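/- Assume α = β (the sieved ultraspherical case). For every integer n ≥ 0, define 𝒬_n(z) = (−ψ_{2n+2}(z;N) + (1 − a_{2n+1}(N))·ψ_{2n+1}(z;N))/(z − z^{−1}) (the sieved ultraspherical polynomial of the second kind in the variable x = z + 1/z). Then for all z ∈ ℂ with z ≠ 0, z² ≠ 1 and z^{2N} ≠ 1, one has z²·𝒬_n″(z) + Ĉ(z)·𝒬_n′(z) + Σ_{k=0}^{N−1} B̂_k(z)·(𝒬_n(q^k/z) − 𝒬_n(z)) = n·(n + (2α+1)N + 2)·𝒬_n(z), where B̂_k(z) = ((q^{2k} − z²)/(q^k(z² − 1)))·B_k(z) with B_k(z) = 2(2α+1)q^k z²/(q^k − z²)², and Ĉ(z) = C(z) + 2z(z²+1)/(z²−1) with C(z) = z·(1 + N(2α+1) + 2N(2α+1)/(z^{2N} − 1)). -/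

import Mathlib

open Finset

/-- Monic OPUC associated to a sequence of (real) Verblunsky parameters. -/
noncomputable def Phi (c : ℕ → ℝ) : ℕ → ℂ → ℂ
  | 0, _ => 1
  | n + 1, z => z * Phi c n z - (c n : ℂ) * z ^ n * Phi c n z⁻¹

/-- CMV Laurent polynomials: ψ_{2m} z = z^m Φ_{2m}(1/z), ψ_{2m+1} z = z^{-m} Φ_{2m+1}(z). -/
noncomputable def psi (c : ℕ → ℝ) (n : ℕ) (z : ℂ) : ℂ :=
  if Even n then z ^ (n / 2) * Phi c n z⁻¹
  else z ^ (-((n / 2 : ℕ) : ℤ)) * Phi c n z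

/-- Verblunsky parameters of the Jacobi OPUC. -/
noncomputable def jacobiA (α β : ℝ) (n : ℕ) : ℝ :=
  -(α + 1 / 2 + (-1 : ℝ) ^ (n + 1) * (β + 1 / 2)) / (n + α + β + 2)

/-- Sieved Verblunsky parameters: a_n(N) = a_{k-1} if n = N k - 1 (k ≥ 1), 0 otherwise. -/
noncomputable def sievedA (α β : ℝ) (N n : ℕ) : ℝ :=
  if N ∣ (n + 1) then jacobiA α β ((n + 1) / N - 1) else 0

/-- The primitive N-th root of unity q = exp(2πi/N). -/
noncomputable def qN (N : ℕ) : ℂ := Complex.exp (2 * Real.pi * Complex.I / N)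

/-- The coefficients A_k(z;N) of the Dunkl-type operator L(N). -/
noncomputable def Acoef (α β : ℝ) (N k : ℕ) (z : ℂ) : ℂ :=
  if Even N then
    ((α : ℂ) + β + 1 + (-1 : ℂ) ^ k * ((α : ℂ) - β)) * z ^ 2 / (qN N ^ k - z ^ 2)
  else
    (((α : ℂ) + β + 1) * z ^ 2 +
        (if Even k then qN N ^ ((k : ℤ) / 2) else qN N ^ (((k : ℤ) - (N : ℤ)) / 2)) *
          ((α : ℂ) - β) * z) /
      (qN N ^ k - z ^ 2)

/-- B(z) = N((α+β+1) z^{2N} + (α-β) z^N)/(z^{2N} - 1). -/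
noncomputable def Bfun (α β : ℝ) (N : ℕ) (z : ℂ) : ℂ :=
  (N : ℂ) * (((α : ℂ) + β + 1) * z ^ (2 * N) + ((α : ℂ) - β) * z ^ N) / (z ^ (2 * N) - 1)

/-- The Dunkl-type operator L(N). -/
noncomputable def Lop (α β : ℝ) (N : ℕ) (f : ℂ → ℂ) : ℂ → ℂ := fun z =>
  z * deriv f z + ∑ k ∈ Finset.range N, Acoef α β N k z * (f (qN N ^ k / z) - f z)

/-- A function ℂ∖{0} → ℂ is a Laurent polynomial. -/
def IsLaurentPoly (f : ℂ → ℂ) : Prop :=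
  ∃ (m : ℕ) (p : Polynomial ℂ), ∀ z : ℂ, z ≠ 0 → f z = Polynomial.eval z p / z ^ m

/-- Sieved Jacobi polynomial of the first kind, as a function of z (x = z + 1/z). -/
noncomputable def sievP (α β : ℝ) (N n : ℕ) (z : ℂ) : ℂ :=
  psi (sievedA α β N) (2 * n) z
    + (1 + (sievedA α β N (2 * n - 1) : ℂ)) * psi (sievedA α β N) (2 * n - 1) z

/-- χ_n(z) = (z - 1/z) Q_{n-1}(x(z)), with Q the sieved Jacobi polynomial of 2nd kind. -/
noncomputable def sievChi (α β : ℝ) (N n : ℕ) (z : ℂ) : ℂ :=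
  -psi (sievedA α β N) (2 * n) z
    + (1 - (sievedA α β N (2 * n - 1) : ℂ)) * psi (sievedA α β N) (2 * n - 1) z

/-- The sieved ultraspherical polynomial of the second kind, as a function of z:
𝒬_n(z) = (-ψ_{2n+2}(z;N) + (1 - a_{2n+1}(N)) ψ_{2n+1}(z;N))/(z - 1/z). -/
noncomputable def sievQ (α : ℝ) (N n : ℕ) (z : ℂ) : ℂ :=
  (-psi (sievedA α α N) (2 * n + 2) z
      + (1 - (sievedA α α N (2 * n + 1) : ℂ)) * psi (sievedA α α N) (2 * n + 1) z)
    / (z - z⁻¹)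

/-!
Sieving replaces `Φ_m(w)` by `zʳ Φ_m(z^M)`, and for `α = β` the sieved sequence is a
sieving of the circular Gegenbauer parameters, whose OPUC satisfy a closed first-order system. Hence
`f = ψ_{2n+1}(·; N)` solves a first-order equation linking `f'`, `f` and `f ∘ (1/z)` with exponent
`ν = n + 1`. Passing from `f` to `f ∘ (1/z)` replaces `ν` by `-(ν + N g)`, with `g = 2α + 1`, which
preserves `ν (ν + N g)`; iterating the system shows this to be the eigenvalue of both functions for
the first-kind operator. So it is an eigenvalue for `f - f ∘ (1/z) = (z - 1/z) 𝒬_n` as well, and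
conjugation by `z - 1/z` gives the second-kind operator with the eigenvalue lowered by `1 + N g`.
-/

section RootsOfUnity

variable {K : Type*} [Field K] {ζ t x : K} {N j : ℕ}

theorem sum_pow_of_isPrimitiveRoot (hζ : IsPrimitiveRoot ζ N) (j : ℕ) :
    ∑ k ∈ range N, (ζ ^ k) ^ j = if N ∣ j then (N : K) else 0 := by
  have hcomm : ∀ k, (ζ ^ k) ^ j = (ζ ^ j) ^ k := fun k => pow_right_comm ζ k j
  simp only [hcomm]
  split_ifs with h
  · simp [(hζ.pow_eq_one_iff_dvd j).2 h]
  · rw [geom_sum_eq (mt (hζ.pow_eq_one_iff_dvd j).1 h), pow_right_comm, hζ.pow_eq_one, one_pow,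
      sub_self, zero_div]

theorem sub_ne_zero_of_pow_eq_one (hx : x ^ N = 1) (ht : t ^ N ≠ 1) : x - t ≠ 0 :=
  sub_ne_zero.2 fun h => ht (h ▸ hx)

theorem sum_pow_succ_div_sub (hζ : IsPrimitiveRoot ζ N) (ht : t ^ N ≠ 1) (hj : j < N) :
    ∑ k ∈ range N, (ζ ^ k) ^ (j + 1) / (ζ ^ k - t) = N * t ^ j / (1 - t ^ N) := by
  have hx : ∀ k, (ζ ^ k) ^ N = 1 := fun k => by rw [pow_right_comm, hζ.pow_eq_one, one_pow]
  have hexpand : ∀ k, (ζ ^ k) ^ (j + 1) / (ζ ^ k - t) * (1 - t ^ N)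
      = ∑ i ∈ range N, t ^ (N - 1 - i) * (ζ ^ k) ^ (j + 1 + i) := fun k => by
    rw [← hx k, ← geom_sum₂_mul, mul_comm (∑ _ ∈ _, _), ← mul_assoc,
      div_mul_cancel₀ _ (sub_ne_zero_of_pow_eq_one (hx k) ht), mul_sum]
    exact sum_congr rfl fun i _ => by rw [pow_add]; ring
  rw [eq_div_iff (sub_ne_zero.2 ht.symm), sum_mul, sum_congr rfl fun k _ => hexpand k, sum_comm]
  simp only [← mul_sum, sum_pow_of_isPrimitiveRoot hζ]
  rw [sum_eq_single (N - 1 - j)]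
  · rw [if_pos ⟨1, by omega⟩, show N - 1 - (N - 1 - j) = j by omega, mul_comm]
  · intro i hi hij
    have hiN := mem_range.1 hi
    rw [if_neg, mul_zero]
    rintro ⟨d, hd⟩
    have hd1 : d = 1 := by nlinarith
    subst hd1
    omega
  · intro hmem
    exact absurd (mem_range.2 (by omega)) hmem

theorem sum_pow_succ_div_sub_sq (hζ : IsPrimitiveRoot ζ N) (ht : t ^ N ≠ 1) (hj : j ≤ N) :
    ∑ k ∈ range N, t * (ζ ^ k) ^ (j + 1) / (ζ ^ k - t) ^ 2
      = t ^ j * (N ^ 2 * t ^ N / (1 - t ^ N) ^ 2 + j * N / (1 - t ^ N)) := by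
  have hx : ∀ k, (ζ ^ k) ^ N = 1 := fun k => by rw [pow_right_comm, hζ.pow_eq_one, one_pow]
  have h1 : 1 - t ^ N ≠ 0 := sub_ne_zero.2 ht.symm
  set T : ℕ → K := fun j => ∑ k ∈ range N, t * (ζ ^ k) ^ (j + 1) / (ζ ^ k - t) ^ 2 with hT
  have hsucc : ∀ j < N, T (j + 1) = t * T j + t * (N * t ^ j / (1 - t ^ N)) := fun j hj => by
    rw [← sum_pow_succ_div_sub hζ ht hj, hT, mul_sum, mul_sum, ← sum_add_distrib]
    refine sum_congr rfl fun k _ => ?_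
    have := sub_ne_zero_of_pow_eq_one (hx k) ht
    field_simp
    ring
  have hT_eq : ∀ j ≤ N, T j = t ^ j * (T 0 + j * N / (1 - t ^ N)) := fun j => by
    induction j with
    | zero => simp
    | succ j ih =>
      intro hj
      rw [hsucc j hj, ih (by omega)]
      push_cast
      ring
  have hperiod : T N = T 0 := by simp only [hT, pow_succ, hx, pow_zero]
  have hT0 : T 0 = N ^ 2 * t ^ N / (1 - t ^ N) ^ 2 := by
    have hT_N := hperiod ▸ hT_eq N le_rfl
    field_simp at hT_N ⊢
    linear_combination hT_N
  exact hT0 ▸ hT_eq j hj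

end RootsOfUnity

section Sieving

variable {c : ℕ → ℝ} {M N r : ℕ} {z : ℂ}

/-- The sieved sequence: `c` spread over the indices `M * k - 1` with `k ≥ 1`, and `0` elsewhere. -/
noncomputable def sieve (M : ℕ) (c : ℕ → ℝ) (n : ℕ) : ℝ :=
  if M ∣ n + 1 then c ((n + 1) / M - 1) else 0

theorem sieve_eq_zero {n : ℕ} (h : ¬ M ∣ n + 1) : sieve M c n = 0 := if_neg h

theorem exists_succ_eq_mul_succ_of_dvd {n : ℕ} (h : M ∣ n + 1) : ∃ k, n + 1 = M * (k + 1) := by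
  obtain ⟨k, hk⟩ := h
  exact ⟨k - 1, by rw [Nat.sub_add_cancel (Nat.pos_of_ne_zero (by rintro rfl; simp at hk)), hk]⟩

theorem sieve_of_succ_eq_mul {m n : ℕ} (h : n + 1 = M * (m + 1)) : sieve M c n = c m := by
  have hM : 0 < M := Nat.pos_of_ne_zero (by rintro rfl; simp at h)
  rw [sieve, h, if_pos (Nat.dvd_mul_right _ _), Nat.mul_div_cancel_left _ hM, Nat.add_sub_cancel]

theorem sieve_sieve : sieve N (sieve M c) = sieve (M * N) c := by
  funext n
  by_cases hNn : N ∣ n + 1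
  · obtain ⟨k, hk⟩ := exists_succ_eq_mul_succ_of_dvd hNn
    rw [sieve_of_succ_eq_mul hk]
    by_cases hMk : M ∣ k + 1
    · obtain ⟨l, hl⟩ := exists_succ_eq_mul_succ_of_dvd hMk
      have hMN : n + 1 = M * N * (l + 1) := by rw [hk, hl]; ring
      rw [sieve_of_succ_eq_mul hl, sieve_of_succ_eq_mul hMN]
    · have hN : 0 < N := Nat.pos_of_ne_zero (by rintro rfl; simp at hk)
      rw [sieve_eq_zero hMk, sieve_eq_zero]
      rwa [hk, mul_comm M, Nat.mul_dvd_mul_iff_left hN]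
  · rw [sieve_eq_zero hNn, sieve_eq_zero fun h => hNn ((Nat.dvd_mul_left _ _).trans h)]

theorem Phi_sieve_mul_add_eq_pow_mul (m : ℕ) (hr : r < M) :
    Phi (sieve M c) (M * m + r) z = z ^ r * Phi (sieve M c) (M * m) z := by
  induction r with
  | zero => simp
  | succ r ih =>
    have hdvd : ¬ M ∣ M * m + r + 1 := by
      rw [add_assoc, Nat.dvd_add_right (Nat.dvd_mul_right _ _)]
      exact Nat.not_dvd_of_pos_of_lt r.succ_pos hr
    rw [← add_assoc, Phi, ih (by omega), sieve_eq_zero hdvd, Complex.ofReal_zero]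
    ring

theorem Phi_sieve_mul (hM : M ≠ 0) (m : ℕ) (hz : z ≠ 0) :
    Phi (sieve M c) (M * m) z = Phi c m (z ^ M) := by
  induction m generalizing z with
  | zero => rfl
  | succ m ih =>
    obtain ⟨r, rfl⟩ := Nat.exists_eq_succ_of_ne_zero hM
    have hidx : (r + 1) * (m + 1) = (r + 1) * m + r + 1 := by ring
    have hcancel : z ^ r * z⁻¹ ^ r = 1 := by rw [← mul_pow, mul_inv_cancel₀ hz, one_pow]
    rw [Nat.succ_eq_add_one] at ih ⊢
    rw [hidx, Phi, Phi_sieve_mul_add_eq_pow_mul m r.lt_succ_self,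
      Phi_sieve_mul_add_eq_pow_mul m r.lt_succ_self, sieve_of_succ_eq_mul hidx.symm,
      ih hz, ih (inv_ne_zero hz), Phi, inv_pow z (r + 1), pow_add z _ r, pow_mul]
    linear_combination -(c m * (z ^ (r + 1)) ^ m * Phi c m (z ^ (r + 1))⁻¹) * hcancel

theorem Phi_sieve (m : ℕ) (hr : r < M) (hz : z ≠ 0) :
    Phi (sieve M c) (M * m + r) z = z ^ r * Phi c m (z ^ M) := by
  rw [Phi_sieve_mul_add_eq_pow_mul m hr, Phi_sieve_mul (Nat.ne_zero_of_lt hr) m hz]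

end Sieving

section Reversal

variable (c : ℕ → ℝ) (n : ℕ) {z : ℂ}

/-- The reversed OPUC `Φ*_n(z) = zⁿ Φ_n(1/z)`; for `z ≠ 0` this is the usual reversal because the
parameters are real. -/
noncomputable def phiStar (z : ℂ) : ℂ := z ^ n * Phi c n z⁻¹

theorem Phi_succ (z : ℂ) : Phi c (n + 1) z = z * Phi c n z - c n * phiStar c n z := by
  rw [Phi, phiStar, mul_assoc]

theorem phiStar_succ (hz : z ≠ 0) :
    phiStar c (n + 1) z = phiStar c n z - c n * (z * Phi c n z) := by
  rw [phiStar, phiStar, Phi, inv_inv, inv_pow]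
  field_simp
  ring

theorem psi_two_mul_add_one (z : ℂ) : psi c (2 * n + 1) z = (z ^ n)⁻¹ * Phi c (2 * n + 1) z := by
  rw [psi, if_neg (by simp [parity_simps]), show (2 * n + 1) / 2 = n by omega, zpow_neg,
    zpow_natCast]

theorem psi_two_mul_add_two (hz : z ≠ 0) :
    psi c (2 * n + 2) z = psi c (2 * n + 1) z⁻¹ - c (2 * n + 1) * psi c (2 * n + 1) z := by
  rw [psi_two_mul_add_one, psi_two_mul_add_one, psi, if_pos (by simp [parity_simps]),
    show (2 * n + 2) / 2 = n + 1 by omega, Phi, inv_inv, inv_pow, inv_pow]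
  field_simp
  ring

end Reversal

section CircularGegenbauer

variable {g : ℝ}

/-- Verblunsky parameters of the circular Gegenbauer polynomials, orthogonal on the unit circle with
respect to the weight `|1 - w| ^ g`. -/
noncomputable def gegenbauerA (g : ℝ) (m : ℕ) : ℝ := -g / (2 * (m + 1) + g)

theorem jacobiA_self (α : ℝ) : jacobiA α α = sieve 2 (gegenbauerA (2 * α + 1)) := by
  funext n
  rcases Nat.even_or_odd' n with ⟨m, rfl | rfl⟩
  · rw [sieve_eq_zero (by omega), jacobiA, (odd_two_mul_add_one m).neg_one_pow]
    ring
  · rw [sieve_of_succ_eq_mul (by ring : 2 * m + 1 + 1 = 2 * (m + 1)), jacobiA, gegenbauerA,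
      show 2 * m + 1 + 1 = 2 * (m + 1) by ring, (even_two_mul (m + 1)).neg_one_pow]
    push_cast
    ring

theorem sievedA_self (α : ℝ) (N : ℕ) :
    sievedA α α N = sieve (2 * N) (gegenbauerA (2 * α + 1)) := by
  rw [← sieve_sieve, ← jacobiA_self]
  rfl

theorem gegenbauerA_mul {m : ℕ} (h : 2 * ((m : ℝ) + 1) + g ≠ 0) :
    (gegenbauerA g m : ℂ) * (2 * (m + 1) + g) = -g := by
  have h' : gegenbauerA g m * (2 * (m + 1) + g) = -g := div_mul_cancel₀ (-g) h
  exact_mod_cast h'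

/-- The derivative of `phiStar (gegenbauerA g) m` away from `0` and `1`. -/
noncomputable def derivPhiStar (g : ℝ) (m : ℕ) (w : ℂ) : ℂ :=
  g / 2 * (Phi (gegenbauerA g) m w - phiStar (gegenbauerA g) m w) / (w - 1)

theorem hasDerivAt_Phi_phiStar_gegenbauerA (hg : ∀ m : ℕ, 2 * ((m : ℝ) + 1) + g ≠ 0) {w : ℂ}
    (hw : w ≠ 0) (hw1 : w ≠ 1) (m : ℕ) :
    HasDerivAt (Phi (gegenbauerA g) m)
        ((m * Phi (gegenbauerA g) m w - derivPhiStar g m w) / w) w ∧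
      HasDerivAt (phiStar (gegenbauerA g) m) (derivPhiStar g m w) w := by
  have hw1' : w - 1 ≠ 0 := sub_ne_zero.2 hw1
  induction m with
  | zero =>
    have hPhi : Phi (gegenbauerA g) 0 = fun _ => 1 := rfl
    have hPhiStar : phiStar (gegenbauerA g) 0 = fun _ => 1 := by funext; simp [phiStar, Phi]
    constructor <;> simp [derivPhiStar, hPhi, hPhiStar, hasDerivAt_const]
  | succ m ih =>
    obtain ⟨hF, hG⟩ := ih
    have hc := gegenbauerA_mul (hg m)
    have hFsucc := ((hasDerivAt_id w).mul hF).sub (hG.const_mul (gegenbauerA g m : ℂ))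
    have hGsucc := hG.sub (((hasDerivAt_id w).mul hF).const_mul (gegenbauerA g m : ℂ))
    constructor
    · refine (hFsucc.congr_of_eventuallyEq (.of_eq (funext (Phi_succ _ m)))).congr_deriv ?_
      simp only [derivPhiStar, Phi_succ, phiStar_succ _ _ hw, id]
      push_cast
      field_simp
      linear_combination (w - 1) * phiStar (gegenbauerA g) m w * hc
    · refine (hGsucc.congr_of_eventuallyEq ?_).congr_deriv ?_
      · filter_upwards [eventually_ne_nhds hw] with y hy using phiStar_succ _ m hy
      simp only [derivPhiStar, Phi_succ, phiStar_succ _ _ hw, id]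
      field_simp
      linear_combination (1 - w) * Phi (gegenbauerA g) m w * hc

end CircularGegenbauer

section SievedSystem

variable {g ν z ζ : ℂ} {N p : ℕ} {f : ℂ → ℂ}

/-- The first-order system satisfied by the sieved ultraspherical CMV Laurent polynomials of odd
index: a differential equation of reflection type, and the covariance with weight `p` under
`N`-th roots of unity. -/
structure IsSievedSolution (g : ℂ) (N p : ℕ) (ν : ℂ) (f : ℂ → ℂ) : Prop where
  hasDerivAt : ∀ z, z ≠ 0 → z ^ (2 * N) ≠ 1 →
    HasDerivAt f ((ν * f z + N * g / (z ^ (2 * N) - 1) * (z ^ (2 * p) * f z⁻¹ - f z)) / z) z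
  map_mul : ∀ x z, x ^ N = 1 → z ≠ 0 → f (x * z) = x ^ p * f z

/-- The second-order operator `z²∂² + C(z)∂ + Σ B_k(z)(R_k - 1)`, where `R_k f(z) = f(ζᵏ/z)`, for
the sieved ultraspherical polynomials of the first kind; `g = 2α + 1`. -/
noncomputable def firstKindOp (ζ g : ℂ) (N : ℕ) (f : ℂ → ℂ) (z : ℂ) : ℂ :=
  z ^ 2 * deriv (deriv f) z
    + z * (1 + N * g + 2 * N * g / (z ^ (2 * N) - 1)) * deriv f z
    + ∑ k ∈ range N, 2 * g * ζ ^ k * z ^ 2 / (ζ ^ k - z ^ 2) ^ 2 * (f (ζ ^ k / z) - f z)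

/-- The operator `z²∂² + Ĉ(z)∂ + Σ B̂_k(z)(R_k - 1)` for the sieved ultraspherical polynomials of
the second kind. -/
noncomputable def secondKindOp (ζ g : ℂ) (N : ℕ) (f : ℂ → ℂ) (z : ℂ) : ℂ :=
  z ^ 2 * deriv (deriv f) z
    + (z * (1 + N * g + 2 * N * g / (z ^ (2 * N) - 1)) + 2 * z * (z ^ 2 + 1) / (z ^ 2 - 1))
      * deriv f z
    + ∑ k ∈ range N, (ζ ^ (2 * k) - z ^ 2) / (ζ ^ k * (z ^ 2 - 1))
        * (2 * g * ζ ^ k * z ^ 2 / (ζ ^ k - z ^ 2) ^ 2) * (f (ζ ^ k / z) - f z)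

theorem hasDerivAt_pow_of_ne_zero (n : ℕ) (hz : z ≠ 0) :
    HasDerivAt (fun y : ℂ => y ^ n) (n * z ^ n / z) z := by
  have h := hasDerivAt_zpow n z (Or.inl hz)
  simp only [zpow_natCast, zpow_sub_one₀ hz, Int.cast_natCast] at h
  rwa [div_eq_mul_inv, mul_assoc]

theorem isOpen_setOf_ne_zero_and_pow_ne_one (n : ℕ) : IsOpen {z : ℂ | z ≠ 0 ∧ z ^ n ≠ 1} :=
  isOpen_ne.inter (isOpen_ne_fun (by fun_prop) (by fun_prop))

namespace IsSievedSolution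

theorem comp_inv (hf : IsSievedSolution g N p ν f) (hp : p ≤ N) :
    IsSievedSolution g N (N - p) (-(ν + N * g)) fun z => f z⁻¹ where
  hasDerivAt z hz hw := by
    have hw_inv : z⁻¹ ^ (2 * N) ≠ 1 := by rwa [inv_pow, ne_eq, inv_eq_one]
    have h := (hf.hasDerivAt z⁻¹ (inv_ne_zero hz) hw_inv).comp z (hasDerivAt_inv hz)
    refine h.congr_deriv ?_
    have hw1 : z ^ (2 * N) - 1 ≠ 0 := sub_ne_zero.2 hw
    have hw1' : 1 - z ^ (2 * N) ≠ 0 := sub_ne_zero.2 hw.symm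
    have hpow : z ^ (2 * (N - p)) = z ^ (2 * N) / z ^ (2 * p) := by
      rw [Nat.mul_sub, pow_sub₀ z hz (by omega), div_eq_mul_inv]
    rw [hpow, inv_inv, inv_pow, inv_pow]
    field_simp
    ring
  map_mul x z hx hz := by
    have hxp : x ^ p * x ^ (N - p) = 1 := by rw [← pow_add, Nat.add_sub_cancel' hp, hx]
    have hx_inv : x⁻¹ ^ N = 1 := by rw [inv_pow, hx, inv_one]
    rw [mul_inv, hf.map_mul _ _ hx_inv (inv_ne_zero hz), inv_pow,
      inv_eq_of_mul_eq_one_right hxp]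

theorem analyticAt (hf : IsSievedSolution g N p ν f) (hz : z ≠ 0) (hw : z ^ (2 * N) ≠ 1) :
    AnalyticAt ℂ f z :=
  DifferentiableOn.analyticAt
    (fun y hy => (hf.hasDerivAt y hy.1 hy.2).differentiableAt.differentiableWithinAt)
    ((isOpen_setOf_ne_zero_and_pow_ne_one (2 * N)).mem_nhds ⟨hz, hw⟩)

theorem sum_reflection (hf : IsSievedSolution g N p ν f) (hp : p ≤ N)
    (hζ : IsPrimitiveRoot ζ N) (hz : z ≠ 0) (hw : z ^ (2 * N) ≠ 1) :
    ∑ k ∈ range N, 2 * g * ζ ^ k * z ^ 2 / (ζ ^ k - z ^ 2) ^ 2 * (f (ζ ^ k / z) - f z)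
      = 2 * g * (z ^ (2 * p) * (N ^ 2 * z ^ (2 * N) / (1 - z ^ (2 * N)) ^ 2
            + p * N / (1 - z ^ (2 * N))) * f z⁻¹
          - N ^ 2 * z ^ (2 * N) / (1 - z ^ (2 * N)) ^ 2 * f z) := by
  have ht : (z ^ 2) ^ N ≠ 1 := by rwa [← pow_mul]
  have hsum_p := sum_pow_succ_div_sub_sq hζ ht hp
  have hsum_0 := sum_pow_succ_div_sub_sq hζ ht N.zero_le
  simp only [← pow_mul, Nat.cast_zero, zero_mul, zero_div, add_zero, pow_zero, one_mul,
    zero_add, mul_one] at hsum_p hsum_0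
  rw [← hsum_p, ← hsum_0, sum_mul, sum_mul, ← sum_sub_distrib, mul_sum]
  refine sum_congr rfl fun k _ => ?_
  have hx : (ζ ^ k) ^ N = 1 := by rw [pow_right_comm, hζ.pow_eq_one, one_pow]
  rw [div_eq_mul_inv (ζ ^ k) z, hf.map_mul _ _ hx (inv_ne_zero hz)]
  ring

theorem firstKindOp_eq (hf : IsSievedSolution g N p ν f) (hp : p ≤ N)
    (hζ : IsPrimitiveRoot ζ N) (hz : z ≠ 0) (hw : z ^ (2 * N) ≠ 1) :
    firstKindOp ζ g N f z = ν * (ν + N * g) * f z := by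
  have hf' := hf.hasDerivAt z hz hw
  have hfinv' := (hf.comp_inv hp).hasDerivAt z hz hw
  have hw1 : z ^ (2 * N) - 1 ≠ 0 := sub_ne_zero.2 hw
  have hderiv : deriv f =ᶠ[nhds z] _ := Filter.eventuallyEq_of_mem
    ((isOpen_setOf_ne_zero_and_pow_ne_one (2 * N)).mem_nhds ⟨hz, hw⟩)
    fun y hy => (hf.hasDerivAt y hy.1 hy.2).deriv
  have hpow : z ^ (2 * (N - p)) = z ^ (2 * N) / z ^ (2 * p) := by
    rw [Nat.mul_sub, pow_sub₀ z hz (by omega), div_eq_mul_inv]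
  have hκ := (hasDerivAt_const z (N * g)).fun_div
    ((hasDerivAt_pow_of_ne_zero (2 * N) hz).sub_const 1) hw1
  have hf'' := ((hf'.const_mul ν).fun_add (hκ.fun_mul
    (((hasDerivAt_pow_of_ne_zero (2 * p) hz).fun_mul hfinv').fun_sub hf'))).fun_div
    (hasDerivAt_id' z) hz
  rw [firstKindOp, hf.sum_reflection hp hζ hz hw, hderiv.deriv_eq, hf''.deriv, hf'.deriv, hpow,
    inv_inv, ← neg_sub (z ^ (2 * N)) 1]
  generalize z ^ (2 * N) = w at *
  push_cast
  field_simp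
  ring

end IsSievedSolution

theorem firstKindOp_sub {f₁ f₂ : ℂ → ℂ} (h₁ : AnalyticAt ℂ f₁ z) (h₂ : AnalyticAt ℂ f₂ z) :
    firstKindOp ζ g N (fun y => f₁ y - f₂ y) z
      = firstKindOp ζ g N f₁ z - firstKindOp ζ g N f₂ z := by
  have hderiv : deriv (fun y => f₁ y - f₂ y) =ᶠ[nhds z] fun y => deriv f₁ y - deriv f₂ y := by
    filter_upwards [h₁.eventually_analyticAt, h₂.eventually_analyticAt] with y hy₁ hy₂
    exact deriv_fun_sub hy₁.differentiableAt hy₂.differentiableAt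
  rw [firstKindOp, firstKindOp, firstKindOp, hderiv.deriv_eq, hderiv.eq_of_nhds,
    deriv_fun_sub h₁.deriv.differentiableAt h₂.deriv.differentiableAt, add_sub_add_comm,
    add_sub_add_comm, ← sum_sub_distrib]
  congr 1
  · ring
  · exact sum_congr rfl fun k _ => by ring

/-- The zeroth-order term left by conjugating the reflections in `firstKindOp` by `z - 1/z`. -/
theorem sum_potential (hζ : IsPrimitiveRoot ζ N) (hz1 : z ^ 2 ≠ 1) (hw : z ^ (2 * N) ≠ 1) :
    ∑ k ∈ range N, ((ζ ^ (2 * k) - z ^ 2) / (ζ ^ k * (z ^ 2 - 1)) - 1)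
        * (2 * g * ζ ^ k * z ^ 2 / (ζ ^ k - z ^ 2) ^ 2)
      = 2 * g * N * (z ^ 2 + z ^ (2 * N)) / ((z ^ 2 - 1) * (1 - z ^ (2 * N))) := by
  have hN : N ≠ 0 := fun h => hw (by simp [h])
  have hz1' : z ^ 2 - 1 ≠ 0 := sub_ne_zero.2 hz1
  have ht : (z ^ 2) ^ N ≠ 1 := by rwa [← pow_mul]
  have hsum_first := sum_pow_succ_div_sub hζ ht (Nat.pos_of_ne_zero hN)
  have hsum_last := sum_pow_succ_div_sub hζ ht (Nat.sub_one_lt hN)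
  have hpow : z ^ (2 * N) = z ^ 2 * z ^ (2 * (N - 1)) := by
    rw [← pow_add]
    congr 1
    omega
  have hx : ∀ k, (ζ ^ k) ^ N = 1 := fun k => by rw [pow_right_comm, hζ.pow_eq_one, one_pow]
  simp only [← pow_mul, zero_add, pow_one, pow_zero, mul_one] at hsum_first
  simp only [Nat.sub_one_add_one hN, hx, ← pow_mul z] at hsum_last
  calc _ = ∑ k ∈ range N, 2 * g * z ^ 2 / (z ^ 2 - 1)
        * (ζ ^ k / (ζ ^ k - z ^ 2) + 1 / (ζ ^ k - z ^ 2)) := by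
        refine sum_congr rfl fun k _ => ?_
        have hk : ζ ^ k - z ^ 2 ≠ 0 := sub_ne_zero_of_pow_eq_one (hx k) ht
        have hζk : ζ ^ k ≠ 0 := pow_ne_zero k (hζ.ne_zero hN)
        rw [mul_comm 2 k, pow_mul]
        field_simp
        ring
    _ = 2 * g * z ^ 2 / (z ^ 2 - 1) * (N / (1 - z ^ (2 * N))
        + N * z ^ (2 * (N - 1)) / (1 - z ^ (2 * N))) := by
        rw [← mul_sum, sum_add_distrib, hsum_first, hsum_last]
    _ = _ := by
        rw [← add_div, div_mul_div_comm]
        congr 1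
        linear_combination -(2 * g * N) * hpow

theorem sum_reflection_sub_inv_mul (hζ : IsPrimitiveRoot ζ N) (hz : z ≠ 0) (hz1 : z ^ 2 ≠ 1)
    (hw : z ^ (2 * N) ≠ 1) :
    ∑ k ∈ range N, 2 * g * ζ ^ k * z ^ 2 / (ζ ^ k - z ^ 2) ^ 2
        * ((ζ ^ k / z - (ζ ^ k / z)⁻¹) * f (ζ ^ k / z) - (z - z⁻¹) * f z)
      = (z - z⁻¹) * (∑ k ∈ range N, (ζ ^ (2 * k) - z ^ 2) / (ζ ^ k * (z ^ 2 - 1))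
            * (2 * g * ζ ^ k * z ^ 2 / (ζ ^ k - z ^ 2) ^ 2) * (f (ζ ^ k / z) - f z)
          + 2 * g * N * (z ^ 2 + z ^ (2 * N)) / ((z ^ 2 - 1) * (1 - z ^ (2 * N))) * f z) := by
  have hN : N ≠ 0 := fun h => hw (by simp [h])
  have hz1' : z ^ 2 - 1 ≠ 0 := sub_ne_zero.2 hz1
  rw [← sum_potential hζ hz1 hw, sum_mul, ← sum_add_distrib, mul_sum]
  refine sum_congr rfl fun k _ => ?_
  have hratio : ζ ^ k / z - (ζ ^ k / z)⁻¹
      = (z - z⁻¹) * ((ζ ^ (2 * k) - z ^ 2) / (ζ ^ k * (z ^ 2 - 1))) := by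
    have hζk : ζ ^ k ≠ 0 := pow_ne_zero k (hζ.ne_zero hN)
    rw [mul_comm 2 k, pow_mul]
    field_simp
  rw [hratio]
  ring

theorem firstKindOp_sub_inv_mul (hζ : IsPrimitiveRoot ζ N) (hf : AnalyticAt ℂ f z)
    (hz : z ≠ 0) (hz1 : z ^ 2 ≠ 1) (hw : z ^ (2 * N) ≠ 1) :
    firstKindOp ζ g N (fun y => (y - y⁻¹) * f y) z
      = (z - z⁻¹) * (secondKindOp ζ g N f z + (1 + N * g) * f z) := by
  have hderiv : deriv (fun y => (y - y⁻¹) * f y)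
      =ᶠ[nhds z] fun y => (1 + (y ^ 2)⁻¹) * f y + (y - y⁻¹) * deriv f y := by
    filter_upwards [hf.eventually_analyticAt, eventually_ne_nhds hz] with y hy hy0
    have h := ((hasDerivAt_id' y).fun_sub (hasDerivAt_inv hy0)).fun_mul
      hy.differentiableAt.hasDerivAt
    rw [h.deriv, sub_neg_eq_add]
  have hderiv₂ := ((((hasDerivAt_pow 2 z).fun_inv (pow_ne_zero 2 hz)).const_add 1).fun_mul
    hf.differentiableAt.hasDerivAt).fun_add (((hasDerivAt_id' z).fun_sub
      (hasDerivAt_inv hz)).fun_mul hf.deriv.differentiableAt.hasDerivAt)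
  have hz1' : z ^ 2 - 1 ≠ 0 := sub_ne_zero.2 hz1
  have hw1 : z ^ (2 * N) - 1 ≠ 0 := sub_ne_zero.2 hw
  rw [firstKindOp, sum_reflection_sub_inv_mul hζ hz hz1 hw, secondKindOp, hderiv.deriv_eq,
    hderiv₂.deriv, hderiv.eq_of_nhds, ← neg_sub (z ^ (2 * N)) 1]
  push_cast
  field_simp
  ring

theorem IsSievedSolution.secondKindOp_eq (hf : IsSievedSolution g N p ν f) (hp : p ≤ N)
    (hζ : IsPrimitiveRoot ζ N) (hz : z ≠ 0) (hz1 : z ^ 2 ≠ 1) (hw : z ^ (2 * N) ≠ 1) :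
    secondKindOp ζ g N (fun y => (f y - f y⁻¹) / (y - y⁻¹)) z
      = (ν * (ν + N * g) - (1 + N * g)) * ((f z - f z⁻¹) / (z - z⁻¹)) := by
  have hz_sub : z - z⁻¹ ≠ 0 := sub_ne_zero.2 fun h =>
    hz1 ((sq z).trans ((mul_eq_one_iff_eq_inv₀ hz).2 h))
  have hf_inv := hf.comp_inv hp
  have hf_an := hf.analyticAt hz hw
  have hf_inv_an := hf_inv.analyticAt hz hw
  have hquot_an : AnalyticAt ℂ (fun y => (f y - f y⁻¹) / (y - y⁻¹)) z :=
    (hf_an.fun_sub hf_inv_an).fun_div (analyticAt_id.fun_sub (analyticAt_inv hz)) hz_sub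
  have hmul : (fun y => (y - y⁻¹) * ((f y - f y⁻¹) / (y - y⁻¹))) = fun y => f y - f y⁻¹ :=
    funext fun y => mul_div_cancel_of_imp' fun h => by rw [← sub_eq_zero.1 h, sub_self]
  have hconj := firstKindOp_sub_inv_mul (g := g) hζ hquot_an hz hz1 hw
  rw [hmul, firstKindOp_sub hf_an hf_inv_an, hf.firstKindOp_eq hp hζ hz hw,
    hf_inv.firstKindOp_eq (N.sub_le p) hζ hz hw] at hconj
  apply mul_left_cancel₀ hz_sub
  rw [mul_left_comm, mul_div_cancel₀ _ hz_sub]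
  linear_combination -hconj - (1 + N * g) * congrFun hmul z

end SievedSystem

section SievedUltraspherical

variable {c : ℕ → ℝ} {g : ℝ} {N m s : ℕ} {z : ℂ}

theorem psi_sieve (hs : s < N) (hz : z ≠ 0) :
    psi (sieve (2 * N) c) (2 * (N * m + s) + 1) z
      = z ^ (s + 1) * (z ^ (N * m))⁻¹ * Phi c m (z ^ (2 * N)) := by
  have hidx : 2 * (N * m + s) + 1 = 2 * N * m + (2 * s + 1) := by ring
  rw [psi_two_mul_add_one, hidx, Phi_sieve m (by omega) hz]
  field_simp
  ring

theorem pow_mul_psi_sieve_inv (hs : s < N) (hz : z ≠ 0) :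
    z ^ (2 * (s + 1)) * psi (sieve (2 * N) c) (2 * (N * m + s) + 1) z⁻¹
      = z ^ (s + 1) * (z ^ (N * m))⁻¹ * phiStar c m (z ^ (2 * N)) := by
  rw [psi_sieve hs (inv_ne_zero hz), phiStar, inv_pow, inv_pow, inv_pow]
  field_simp
  ring

theorem isSievedSolution_psi (hg : ∀ m : ℕ, 2 * ((m : ℝ) + 1) + g ≠ 0) (hs : s < N) (m : ℕ) :
    IsSievedSolution g N (s + 1) (N * m + s + 1)
      (psi (sieve (2 * N) (gegenbauerA g)) (2 * (N * m + s) + 1)) where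
  hasDerivAt z hz hw := by
    obtain ⟨hPhi, -⟩ := hasDerivAt_Phi_phiStar_gegenbauerA hg (pow_ne_zero (2 * N) hz) hw m
    have h := ((hasDerivAt_pow_of_ne_zero (s + 1) hz).fun_mul
      ((hasDerivAt_pow_of_ne_zero (N * m) hz).fun_inv (pow_ne_zero _ hz))).fun_mul
      (hPhi.comp (h := fun y => y ^ (2 * N)) z (hasDerivAt_pow_of_ne_zero (2 * N) hz))
    refine (h.congr_of_eventuallyEq ?_).congr_deriv ?_
    · filter_upwards [eventually_ne_nhds hz] with y hy using psi_sieve hs hy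
    · have hw1 : z ^ (2 * N) - 1 ≠ 0 := sub_ne_zero.2 hw
      rw [pow_mul_psi_sieve_inv hs hz, psi_sieve hs hz, derivPhiStar, Function.comp_apply]
      push_cast
      field_simp
      ring
  map_mul x z hx hz := by
    have hx0 : x ≠ 0 := by
      rintro rfl
      simp [Nat.ne_zero_of_lt hs] at hx
    rw [psi_sieve hs (mul_ne_zero hx0 hz), psi_sieve hs hz, mul_pow, mul_pow x z (N * m),
      mul_pow x z (2 * N), pow_mul x N, mul_comm 2 N, pow_mul x N, hx, one_pow, one_pow, one_mul,
      one_mul]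
    ring

theorem sievQ_eq_div (α : ℝ) (N n : ℕ) (z : ℂ) :
    sievQ α N n z = (psi (sievedA α α N) (2 * n + 1) z
      - psi (sievedA α α N) (2 * n + 1) z⁻¹) / (z - z⁻¹) := by
  rcases eq_or_ne z 0 with rfl | hz
  · simp [sievQ]
  · rw [sievQ, psi_two_mul_add_two _ n hz]
    congr 1
    ring

theorem stmt_18_general (α : ℝ) (hα : ∀ k : ℕ, (k : ℝ) + 2 * α + 2 ≠ 0) (N n : ℕ)
    (z : ℂ) (hz : z ≠ 0) (hz1 : z ^ 2 ≠ 1) (hz2 : z ^ (2 * N) ≠ 1) :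
    secondKindOp (qN N) (2 * α + 1) N (sievQ α N n) z
      = n * (n + (2 * α + 1) * N + 2) * sievQ α N n z := by
  have hN : N ≠ 0 := fun h => hz2 (by simp [h])
  have hζ : IsPrimitiveRoot (qN N) N := Complex.isPrimitiveRoot_exp N hN
  have hg : ∀ m : ℕ, 2 * ((m : ℝ) + 1) + (2 * α + 1) ≠ 0 := fun m => by
    convert hα (2 * m + 1) using 1
    push_cast
    ring
  have hs : n % N < N := Nat.mod_lt n (Nat.pos_of_ne_zero hN)
  have hn : N * (n / N) + n % N = n := Nat.div_add_mod n N
  have hψ := isSievedSolution_psi hg hs (n / N)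
  have hn_cast : (N * (n / N : ℕ) + (n % N : ℕ) + 1 : ℂ) = n + 1 := by
    exact_mod_cast congrArg (· + 1) hn
  rw [hn_cast, hn, ← sievedA_self] at hψ
  push_cast at hψ
  rw [funext (sievQ_eq_div α N n), hψ.secondKindOp_eq hs hζ hz hz1 hz2]
  ring

end SievedUltraspherical

/-- in the ultraspherical case α = β, the sieved ultraspherical polynomial
of the second kind 𝒬_n satisfies the explicit eigenvalue equation with eigenvalue
n(n + (2α+1)N + 2). -/
theorem stmt_18 (α : ℝ) (hα : -1 < α) (N : ℕ) (hN : 1 ≤ N) (n : ℕ)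
    (z : ℂ) (hz : z ≠ 0) (hz1 : z ^ 2 ≠ 1) (hz2 : z ^ (2 * N) ≠ 1) :
    z ^ 2 * deriv (deriv (sievQ α N n)) z
      + (z * (1 + (N : ℂ) * (2 * (α : ℂ) + 1)
            + 2 * (N : ℂ) * (2 * (α : ℂ) + 1) / (z ^ (2 * N) - 1))
          + 2 * z * (z ^ 2 + 1) / (z ^ 2 - 1)) * deriv (sievQ α N n) z
      + ∑ k ∈ Finset.range N,
          (qN N ^ (2 * k) - z ^ 2) / (qN N ^ k * (z ^ 2 - 1))
            * (2 * (2 * (α : ℂ) + 1) * qN N ^ k * z ^ 2 / (qN N ^ k - z ^ 2) ^ 2)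
            * (sievQ α N n (qN N ^ k / z) - sievQ α N n z)
      = (n : ℂ) * ((n : ℂ) + (2 * (α : ℂ) + 1) * N + 2) * sievQ α N n z :=
  stmt_18_general α (fun k => by have := k.cast_nonneg (α := ℝ); linarith) N n z hz hz1 hz2
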